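/- For every integer k ≥ 3 there exists a constant C_k > 0 such that for all real y, the k-th iterated derivative of W̄ satisfies |W̄^{(k)}(y)| ≤ C_k · ⟨y⟩^{1/3 − k}. -/

import Mathlib

/-- The stable self-similar Burgers profile `W̄`. -/
noncomputable def Wbar (y : ℝ) : ℝ :=
  (-y / 2 + Real.sqrt (1 / 27 + y ^ 2 / 4)) ^ ((1 : ℝ) / 3) -
  (y / 2 + Real.sqrt (1 / 27 + y ^ 2 / 4)) ^ ((1 : ℝ) / 3)

/-! By Cardano's formula the profile is the inverse function of the cubic `-(w + w³)`. Hence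
`W̄' = 1 / q(W̄)` with `q(w) = -(1 + 3w²)`, and inductively `W̄⁽ᵏ⁾ = Pₖ(W̄) / q(W̄)²ᵏ` with a
polynomial `Pₖ` of degree at most `k + 1`, which gives `|W̄⁽ᵏ⁾| ≤ C ⟨W̄⟩^(1 - 3k)`. The cubic also
shows that `⟨W̄(y)⟩³` is comparable to `⟨y⟩`. -/

open Polynomial

/-- The polynomials `Pₖ` for which every solution of `f' = 1 / q(f)` has `k`-th derivative
`Pₖ(f) / q(f)²ᵏ`. The exponent `2k`, one more than needed when `k ≥ 1`, is chosen so that the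
recursion starts at `k = 0`. -/
noncomputable def derivNumerator {R : Type*} [CommRing R] (q : R[X]) : ℕ → R[X]
  | 0 => X
  | k + 1 =>
    q * derivative (derivNumerator q k) - ((2 * k : ℕ) : R[X]) * derivative q * derivNumerator q k

lemma natDegree_derivNumerator_le {R : Type*} [CommRing R] {q : R[X]} {d : ℕ}
    (hq : q.natDegree ≤ d + 1) (k : ℕ) : (derivNumerator q k).natDegree ≤ k * d + 1 := by
  induction k with
  | zero => simpa only [derivNumerator, zero_mul, zero_add] using natDegree_X_le
  | succ k ih =>
    have hP' : (derivative (derivNumerator q k)).natDegree ≤ k * d :=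
      (natDegree_derivative_le _).trans (Nat.sub_le_of_le_add ih)
    have hq' : (derivative q).natDegree ≤ d :=
      (natDegree_derivative_le q).trans (Nat.sub_le_of_le_add hq)
    have hfst := natDegree_mul_le_of_le hq hP'
    have hsnd := natDegree_mul_le_of_le
      (natDegree_mul_le_of_le (natDegree_natCast (R := R) (2 * k)).le hq') ih
    rw [derivNumerator]
    exact (natDegree_sub_le_of_le hfst hsnd).trans (max_le (by linarith) (by linarith))

lemma hasDerivAt_eval_div_eval_pow {𝕜 : Type*} [NontriviallyNormedField 𝕜] (p : 𝕜[X]) {q : 𝕜[X]}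
    (n : ℕ) {w : 𝕜} (hq : q.eval w ≠ 0) :
    HasDerivAt (fun w ↦ p.eval w / q.eval w ^ n)
      ((q * derivative p - (n : 𝕜[X]) * derivative q * p).eval w / q.eval w ^ (n + 1)) w := by
  refine ((p.hasDerivAt w).fun_div ((q.hasDerivAt w).fun_pow n) (pow_ne_zero n hq)).congr_deriv ?_
  simp only [eval_sub, eval_mul, eval_natCast]
  rcases n with _ | n
  · simp [hq]
  · rw [Nat.add_sub_cancel]
    field_simp
    ring

lemma iteratedDeriv_of_hasDerivAt_inv_eval {𝕜 : Type*} [NontriviallyNormedField 𝕜] {f : 𝕜 → 𝕜}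
    {q : 𝕜[X]} (hq : ∀ y, q.eval (f y) ≠ 0) (hf : ∀ y, HasDerivAt f (q.eval (f y))⁻¹ y) (k : ℕ) :
    iteratedDeriv k f = fun y ↦ (derivNumerator q k).eval (f y) / q.eval (f y) ^ (2 * k) := by
  induction k with
  | zero => simp [derivNumerator]
  | succ k ih =>
    rw [iteratedDeriv_succ, ih]
    funext y
    have hchain := (hasDerivAt_eval_div_eval_pow (derivNumerator q k) (2 * k) (hq y)).comp y (hf y)
    refine hchain.deriv.trans ?_
    rw [derivNumerator, ← div_eq_mul_inv, div_div, ← pow_succ, mul_add_one]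

lemma norm_eval_le_sum_norm_coeff_mul_pow {R : Type*} [SeminormedRing R] [NormOneClass R]
    {P : R[X]} {n : ℕ} (hP : P.natDegree ≤ n) {w : R} {s : ℝ} (hw : ‖w‖ ≤ s) (hs : 1 ≤ s) :
    ‖P.eval w‖ ≤ (∑ i ∈ Finset.range (n + 1), ‖P.coeff i‖) * s ^ n := by
  rw [eval_eq_sum_range' (Nat.lt_succ_of_le hP), Finset.sum_mul]
  refine norm_sum_le_of_le _ fun i hi ↦ ?_
  have hi' : i ≤ n := Finset.mem_range_succ_iff.mp hi
  calc ‖P.coeff i * w ^ i‖ ≤ ‖P.coeff i‖ * ‖w‖ ^ i :=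
        norm_mul_le_of_le le_rfl (norm_pow_le w i)
    _ ≤ ‖P.coeff i‖ * s ^ n := by
        gcongr
        exact (pow_le_pow_left₀ (norm_nonneg w) hw i).trans (pow_le_pow_right₀ hs hi')

lemma rpow_le_rpow_abs_mul_rpow {x z c : ℝ} (hx : 0 < x) (hxz : x ≤ z) (hzc : z ≤ c * x)
    (r : ℝ) : z ^ r ≤ c ^ |r| * x ^ r := by
  have hc : 1 ≤ c := (le_mul_iff_one_le_left hx).mp (hxz.trans hzc)
  have hc0 : 0 ≤ c := zero_le_one.trans hc
  rcases le_total r 0 with hr | hr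
  · calc z ^ r ≤ x ^ r := Real.rpow_le_rpow_of_nonpos hx hxz hr
      _ ≤ c ^ |r| * x ^ r :=
        le_mul_of_one_le_left (by positivity) (Real.one_le_rpow hc (abs_nonneg r))
  · calc z ^ r ≤ (c * x) ^ r := Real.rpow_le_rpow (hx.le.trans hxz) hzc hr
      _ = c ^ |r| * x ^ r := by rw [Real.mul_rpow hc0 hx.le, abs_of_nonneg hr]

lemma sqrt_one_add_cubic_sq_le (w : ℝ) : √(1 + (w + w ^ 3) ^ 2) ≤ √(1 + w ^ 2) ^ 3 := by
  refine Real.sqrt_le_iff.mpr ⟨by positivity, ?_⟩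
  rw [pow_right_comm, Real.sq_sqrt (by positivity)]
  have : 0 ≤ 2 * w ^ 2 + w ^ 4 := by positivity
  linarith

lemma sqrt_one_add_sq_pow_three_le (w : ℝ) :
    √(1 + w ^ 2) ^ 3 ≤ 2 * √(1 + (w + w ^ 3) ^ 2) := by
  refine le_of_sq_le_sq ?_ (by positivity)
  rw [pow_right_comm, mul_pow, Real.sq_sqrt (by positivity), Real.sq_sqrt (by positivity)]
  have : 0 ≤ 3 + w ^ 2 + 5 * w ^ 4 + 3 * w ^ 6 := by positivity
  linarith

lemma add_half_sqrt_pos (y : ℝ) : 0 < y / 2 + √(1 / 27 + y ^ 2 / 4) := by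
  have h : |y / 2| < √(1 / 27 + y ^ 2 / 4) := Real.lt_sqrt_of_sq_lt (by rw [sq_abs]; linarith)
  linarith [neg_abs_le (y / 2)]

lemma Wbar_add_cube (y : ℝ) : Wbar y + Wbar y ^ 3 = -y := by
  have hu : 0 < -y / 2 + √(1 / 27 + y ^ 2 / 4) := by simpa using add_half_sqrt_pos (-y)
  have hv := add_half_sqrt_pos y
  have hs : √(1 / 27 + y ^ 2 / 4) ^ 2 = 1 / 27 + y ^ 2 / 4 := Real.sq_sqrt (by positivity)
  unfold Wbar
  set u := -y / 2 + √(1 / 27 + y ^ 2 / 4) with u_def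
  set v := y / 2 + √(1 / 27 + y ^ 2 / 4) with v_def
  have cube_cbrt {x : ℝ} (hx : 0 < x) : (x ^ ((1 : ℝ) / 3)) ^ 3 = x := by
    simpa using Real.rpow_inv_natCast_pow hx.le three_ne_zero
  have huv : u ^ ((1 : ℝ) / 3) * v ^ ((1 : ℝ) / 3) = 1 / 3 := by
    have huv27 : u * v = (1 / 3) ^ 3 := by rw [u_def, v_def]; linear_combination hs
    rw [← Real.mul_rpow hu.le hv.le, huv27]
    simpa using Real.pow_rpow_inv_natCast (x := 1 / 3) (by norm_num) three_ne_zero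
  have hsub : u - v = -y := by rw [u_def, v_def]; ring
  linear_combination cube_cbrt hu - cube_cbrt hv
    - 3 * (u ^ ((1 : ℝ) / 3) - v ^ ((1 : ℝ) / 3)) * huv + hsub

lemma continuous_Wbar : Continuous Wbar := by
  unfold Wbar
  fun_prop (disch := norm_num)

/-- The cubic `-(w + w³)`, whose inverse function is the Burgers profile. -/
noncomputable def burgersCubic : ℝ[X] := -(X + X ^ 3)

lemma eval_burgersCubic_Wbar (y : ℝ) : burgersCubic.eval (Wbar y) = y := by
  simp only [burgersCubic, eval_neg, eval_add, eval_pow, eval_X, Wbar_add_cube, neg_neg]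

lemma eval_derivative_burgersCubic (w : ℝ) :
    (derivative burgersCubic).eval w = -(1 + 3 * w ^ 2) := by
  norm_num [burgersCubic]

lemma eval_derivative_burgersCubic_ne_zero (w : ℝ) : (derivative burgersCubic).eval w ≠ 0 := by
  rw [eval_derivative_burgersCubic, neg_ne_zero]
  positivity

lemma natDegree_derivative_burgersCubic_le : (derivative burgersCubic).natDegree ≤ 2 := by
  have hdeg : burgersCubic.natDegree ≤ 3 := by
    unfold burgersCubic
    compute_degree
  exact (natDegree_derivative_le _).trans (Nat.sub_le_of_le_add hdeg)

lemma hasDerivAt_Wbar (y : ℝ) :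
    HasDerivAt Wbar ((derivative burgersCubic).eval (Wbar y))⁻¹ y :=
  (burgersCubic.hasDerivAt (Wbar y)).of_local_left_inverse continuous_Wbar.continuousAt
    (eval_derivative_burgersCubic_ne_zero _) (.of_forall eval_burgersCubic_Wbar)

lemma exists_abs_iteratedDeriv_Wbar_le_rpow_bracket_Wbar (k : ℕ) :
    ∃ C : ℝ, 0 < C ∧
      ∀ y, |iteratedDeriv k Wbar y| ≤ C * (√(1 + Wbar y ^ 2) ^ 3) ^ ((1 : ℝ) / 3 - k) := by
  set q := derivative burgersCubic
  set P := derivNumerator q k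
  have hP : P.natDegree ≤ k + 1 := by
    simpa using natDegree_derivNumerator_le natDegree_derivative_burgersCubic_le k
  set S := ∑ i ∈ Finset.range (k + 2), ‖P.coeff i‖
  have hS : 0 ≤ S := by positivity
  refine ⟨S + 1, add_pos_of_nonneg_of_pos hS one_pos, fun y ↦ ?_⟩
  set w := Wbar y
  set s := √(1 + w ^ 2)
  have hs_sq : s ^ 2 = 1 + w ^ 2 := Real.sq_sqrt (by positivity)
  have hs_one : 1 ≤ s := Real.one_le_sqrt.mpr (by linarith [sq_nonneg w])
  have hs_pos : 0 < s := zero_lt_one.trans_le hs_one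
  have hnum : |P.eval w| ≤ S * s ^ (k + 1) :=
    norm_eval_le_sum_norm_coeff_mul_pow hP (Real.abs_le_sqrt (by linarith)) hs_one
  have hden : s ^ 2 ≤ |q.eval w| := by
    rw [eval_derivative_burgersCubic, abs_neg, abs_of_pos (by positivity), hs_sq]
    linarith [sq_nonneg w]
  have hexp : s ^ (k + 1) / (s ^ 2) ^ (2 * k) = (s ^ 3) ^ ((1 : ℝ) / 3 - k) := by
    simp only [← Real.rpow_natCast, ← Real.rpow_mul hs_pos.le, ← Real.rpow_sub hs_pos]
    congr 1
    push_cast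
    ring
  calc |iteratedDeriv k Wbar y| = |P.eval w| / |q.eval w| ^ (2 * k) := by
        rw [iteratedDeriv_of_hasDerivAt_inv_eval
          (fun y ↦ eval_derivative_burgersCubic_ne_zero (Wbar y)) hasDerivAt_Wbar, abs_div, abs_pow]
    _ ≤ S * s ^ (k + 1) / (s ^ 2) ^ (2 * k) := by gcongr
    _ = S * (s ^ 3) ^ ((1 : ℝ) / 3 - k) := by rw [mul_div_assoc, hexp]
    _ ≤ (S + 1) * (s ^ 3) ^ ((1 : ℝ) / 3 - k) := by gcongr; exact le_add_of_nonneg_right zero_le_one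

theorem Wbar_higher_deriv_decay_general (k : ℕ) :
    ∃ C : ℝ, 0 < C ∧
      ∀ y : ℝ, |iteratedDeriv k Wbar y| ≤ C * Real.sqrt (1 + y ^ 2) ^ ((1 : ℝ) / 3 - k) := by
  obtain ⟨C, hC, hdecay⟩ := exists_abs_iteratedDeriv_Wbar_le_rpow_bracket_Wbar k
  set r : ℝ := 1 / 3 - k
  refine ⟨C * 2 ^ |r|, by positivity, fun y ↦ ?_⟩
  have hy : y ^ 2 = (Wbar y + Wbar y ^ 3) ^ 2 := by rw [Wbar_add_cube, neg_sq]
  have hbracket : (√(1 + Wbar y ^ 2) ^ 3) ^ r ≤ 2 ^ |r| * √(1 + y ^ 2) ^ r := by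
    rw [hy]
    exact rpow_le_rpow_abs_mul_rpow (by positivity)
      (sqrt_one_add_cubic_sq_le _) (sqrt_one_add_sq_pow_three_le _) r
  calc |iteratedDeriv k Wbar y| ≤ C * (√(1 + Wbar y ^ 2) ^ 3) ^ r := hdecay y
    _ ≤ C * 2 ^ |r| * √(1 + y ^ 2) ^ r := by rw [mul_assoc]; gcongr

/-- For every integer `k ≥ 3` there is a constant `C_k > 0` with
`|W̄^{(k)}(y)| ≤ C_k ⟨y⟩^{1/3 − k}` for all real `y`, where `⟨y⟩ = (1 + y²)^{1/2}`. -/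
theorem Wbar_higher_deriv_decay (k : ℕ) (hk : 3 ≤ k) :
    ∃ C : ℝ, 0 < C ∧
      ∀ y : ℝ, |iteratedDeriv k Wbar y| ≤ C * Real.sqrt (1 + y ^ 2) ^ ((1 : ℝ) / 3 - k) :=
  Wbar_higher_deriv_decay_general k
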